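/- In any nondegenerate triangle, the distance from the symmedian point X6 to the incenter X1 satisfies dist(X6, X1) ≤ (2 − √3)·dist(X6, X3), where X3 is the circumcenter. -/

import Mathlib

/-- The point with normalized barycentric coordinates `(x : y : z)`
with respect to the triangle `A B C`. -/
noncomputable def bary (A B C : EuclideanSpace ℝ (Fin 2)) (x y z : ℝ) :
    EuclideanSpace ℝ (Fin 2) :=
  (x + y + z)⁻¹ • (x • A + y • B + z • C)

/-- The triangle center with barycentric coordinates
`(f a b c : f b c a : f c a b)` where `a, b, c` are the side lengths. -/
noncomputable def tcenter (f : ℝ → ℝ → ℝ → ℝ) (A B C : EuclideanSpace ℝ (Fin 2)) :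
    EuclideanSpace ℝ (Fin 2) :=
  bary A B C (f (dist B C) (dist C A) (dist A B))
    (f (dist C A) (dist A B) (dist B C))
    (f (dist A B) (dist B C) (dist C A))

/-!
Both distances are rational functions of the side lengths. With `p = a + b + c`,
`S = a² + b² + c²` and `T = (b + c - a)(c + a - b)(a + b - c)`, they are
`|X₆X₁|² = abc D / (p S²)` and `|X₆X₃|² = (abc)² (S² - 3pT) / (p T S²)` for a quintic form `D`,
so that the claim reads `D T ≤ (2 - √3)² abc (S² - 3pT)`.
Let `t` be the least side and `w + d`, `w - d` the other two. In the isosceles case `d = 0` the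
inequality is the square of `t (2w - t) ≤ 2 (2 - √3) w (w + t)`, whose defect is the perfect square
`(t - (√3 - 1) w)²`: this is where the constant comes from. For `d ≠ 0` the
left side gains at most `3 w⁴ d² t` and the right side at least `42 (2 - √3)² w⁴ d² t`, which is
enough because `(2 - √3)² ≥ 1 / 14`.
-/

open Finset Real

section SideLengths

/-- The form `(b + c - a)(c + a - b)(a + b - c)` in the side lengths of a triangle; its product with
the perimeter is `16` times the squared area, by Heron's formula. -/
def heronForm (a b c : ℝ) : ℝ :=
  (b + c - a) * (c + a - b) * (a + b - c)

/-- The quintic form `D` in the side lengths of a triangle for which the squared distance from the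
symmedian point to the incenter is `abc D / ((a + b + c) (a² + b² + c²)²)`. -/
def symmedianIncenterForm (a b c : ℝ) : ℝ :=
  2 * (a * b + b * c + c * a) * (a ^ 2 + b ^ 2 + c ^ 2) - (a ^ 2 + b ^ 2 + c ^ 2) ^ 2
    - 3 * (a * b * c) * (a + b + c)

/-- The quartic form `E` in the side lengths of a triangle for which the squared distance from the
symmedian point to the circumcenter is
`(abc)² E / ((a + b + c) T (a² + b² + c²)²)`, with `T = heronForm a b c`. -/
def symmedianCircumcenterForm (a b c : ℝ) : ℝ :=
  (a ^ 2 + b ^ 2 + c ^ 2) ^ 2 - 3 * (a + b + c) * heronForm a b c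

theorem heronForm_rotate (a b c : ℝ) : heronForm b c a = heronForm a b c := by
  unfold heronForm; ring

theorem symmedianIncenterForm_rotate (a b c : ℝ) :
    symmedianIncenterForm b c a = symmedianIncenterForm a b c := by
  unfold symmedianIncenterForm; ring

theorem symmedianCircumcenterForm_rotate (a b c : ℝ) :
    symmedianCircumcenterForm b c a = symmedianCircumcenterForm a b c := by
  unfold symmedianCircumcenterForm heronForm; ring

theorem one_div_fourteen_le_two_sub_sqrt_three_sq : 1 / 14 ≤ (2 - √3) ^ 2 := by
  have sqrt_three_le : √3 ≤ 97 / 56 := sqrt_le_iff.2 (by norm_num)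
  linarith [sq_sqrt (show (0 : ℝ) ≤ 3 by norm_num)]

theorem mul_two_mul_sub_le_two_sub_sqrt_three_mul (w t : ℝ) :
    t * (2 * w - t) ≤ 2 * (2 - √3) * (w * (w + t)) := by
  have defect_eq_sq : 2 * (2 - √3) * (w * (w + t)) - t * (2 * w - t) = (t - (√3 - 1) * w) ^ 2 := by
    linear_combination -w ^ 2 * sq_sqrt (show (0 : ℝ) ≤ 3 by norm_num)
  linarith [sq_nonneg (t - (√3 - 1) * w)]

variable {w d t : ℝ}

theorem isosceles_inequality (ht : 0 ≤ t) (htw : t ≤ w) :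
    (w - t) ^ 2 * (t * (2 * w - t)) ^ 2 ≤ (2 - √3) ^ 2 * (4 * w ^ 2 * (w ^ 2 - t ^ 2) ^ 2) :=
  calc (w - t) ^ 2 * (t * (2 * w - t)) ^ 2
      ≤ (w - t) ^ 2 * (2 * (2 - √3) * (w * (w + t))) ^ 2 := by
        have left_nonneg : 0 ≤ t * (2 * w - t) := mul_nonneg ht (by linarith)
        gcongr (w - t) ^ 2 * ?_ ^ 2
        exact mul_two_mul_sub_le_two_sub_sqrt_three_mul w t
    _ = (2 - √3) ^ 2 * (4 * w ^ 2 * (w ^ 2 - t ^ 2) ^ 2) := by ring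

theorem symmedianIncenterForm_le (ht : 0 ≤ t) (htw : t ≤ w) :
    symmedianIncenterForm (w + d) (w - d) t ≤
      t * (w - t) ^ 2 * (2 * w - t) + 3 * t ^ 2 * d ^ 2 := by
  have defect_nonneg : 0 ≤ 2 * d ^ 2 * ((w - t) * (4 * w - 3 * t)) + 8 * d ^ 4 := by
    have := mul_nonneg (sub_nonneg.2 htw) (show 0 ≤ 4 * w - 3 * t by linarith)
    positivity
  unfold symmedianIncenterForm
  linear_combination defect_nonneg

theorem heronForm_nonneg_of_abs_le (hd : 2 * |d| ≤ t) (htw : t ≤ w) :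
    0 ≤ heronForm (w + d) (w - d) t := by
  have := abs_nonneg d
  have hd_le := le_abs_self d
  have neg_d_le := neg_abs_le d
  exact mul_nonneg (mul_nonneg (by linarith) (by linarith)) (by linarith)

theorem heronForm_le (htw : t ≤ 2 * w) : heronForm (w + d) (w - d) t ≤ t ^ 2 * (2 * w - t) := by
  unfold heronForm
  linear_combination 4 * mul_nonneg (sq_nonneg d) (sub_nonneg.2 htw)

theorem pow_three_mul_two_mul_sub_le (ht : 0 ≤ t) (htw : t ≤ w) :
    t ^ 3 * (2 * w - t) ≤ w ^ 4 := by
  have hw : 0 ≤ w := ht.trans htw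
  have factor_nonneg : 0 ≤ w ^ 2 * (w + t) + t ^ 2 * (w - t) := by
    have := sub_nonneg.2 htw
    positivity
  linear_combination mul_nonneg (sub_nonneg.2 htw) factor_nonneg

theorem symmedianIncenterForm_mul_heronForm_le_add_sq (hd : 2 * |d| ≤ t) (htw : t ≤ w) :
    symmedianIncenterForm (w + d) (w - d) t * heronForm (w + d) (w - d) t ≤
      t * ((w - t) ^ 2 * (t * (2 * w - t)) ^ 2 + 3 * w ^ 4 * d ^ 2) := by
  have ht : 0 ≤ t := by linarith [abs_nonneg d]
  have h2wt : 0 ≤ 2 * w - t := by linarith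
  calc symmedianIncenterForm (w + d) (w - d) t * heronForm (w + d) (w - d) t
      ≤ (t * (w - t) ^ 2 * (2 * w - t) + 3 * t ^ 2 * d ^ 2) * (t ^ 2 * (2 * w - t)) :=
        mul_le_mul (symmedianIncenterForm_le ht htw) (heronForm_le (by linarith))
          (heronForm_nonneg_of_abs_le hd htw) (by positivity)
    _ = t * ((w - t) ^ 2 * (t * (2 * w - t)) ^ 2 + 3 * (t ^ 3 * (2 * w - t)) * d ^ 2) := by ring
    _ ≤ t * ((w - t) ^ 2 * (t * (2 * w - t)) ^ 2 + 3 * w ^ 4 * d ^ 2) := by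
        gcongr
        exact pow_three_mul_two_mul_sub_le ht htw

theorem add_sq_le_mul_symmedianCircumcenterForm (ht : 0 ≤ t) (htw : t ≤ w) (hd : 3 * |d| ≤ w) :
    4 * w ^ 2 * (w ^ 2 - t ^ 2) ^ 2 + 42 * w ^ 4 * d ^ 2 ≤
      (w ^ 2 - d ^ 2) * symmedianCircumcenterForm (w + d) (w - d) t := by
  have ht_sq : 0 ≤ w ^ 2 - t ^ 2 := sub_nonneg.2 (pow_le_pow_left₀ ht htw 2)
  have hd_sq : 9 * d ^ 2 ≤ w ^ 2 := by
    have := pow_le_pow_left₀ (by positivity) hd 2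
    rwa [mul_pow, sq_abs, show (3 : ℝ) ^ 2 = 9 by norm_num] at this
  have coeff_nonneg : 0 ≤ (w ^ 2 - t ^ 2) * (3 * w ^ 2 + 4 * t ^ 2)
      + (w ^ 2 - 8 * d ^ 2) * (7 * w ^ 2 - t ^ 2) + 4 * d ^ 2 * (w ^ 2 - d ^ 2) := by
    have h8d : 0 ≤ w ^ 2 - 8 * d ^ 2 := by linarith [sq_nonneg d]
    have h7w : 0 ≤ 7 * w ^ 2 - t ^ 2 := by linarith [sq_nonneg w]
    have hwd : 0 ≤ w ^ 2 - d ^ 2 := by linarith [sq_nonneg d]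
    positivity
  unfold symmedianCircumcenterForm heronForm
  linear_combination mul_nonneg (sq_nonneg d) coeff_nonneg

theorem symmedianIncenterForm_mul_heronForm_le_of_abs_le (hd : 2 * |d| ≤ t) (hdt : t + |d| ≤ w) :
    symmedianIncenterForm (w + d) (w - d) t * heronForm (w + d) (w - d) t ≤
      (2 - √3) ^ 2 * (((w + d) * (w - d) * t) * symmedianCircumcenterForm (w + d) (w - d) t) := by
  have ht : 0 ≤ t := by linarith [abs_nonneg d]
  have htw : t ≤ w := by linarith [abs_nonneg d]
  have eccentric : 3 * w ^ 4 * d ^ 2 ≤ (2 - √3) ^ 2 * (42 * w ^ 4 * d ^ 2) := by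
    linear_combination 42 * w ^ 4 * d ^ 2 * one_div_fourteen_le_two_sub_sqrt_three_sq
  calc symmedianIncenterForm (w + d) (w - d) t * heronForm (w + d) (w - d) t
      ≤ t * ((w - t) ^ 2 * (t * (2 * w - t)) ^ 2 + 3 * w ^ 4 * d ^ 2) :=
        symmedianIncenterForm_mul_heronForm_le_add_sq hd htw
    _ ≤ t * ((2 - √3) ^ 2 * (4 * w ^ 2 * (w ^ 2 - t ^ 2) ^ 2 + 42 * w ^ 4 * d ^ 2)) := by
        rw [mul_add ((2 - √3) ^ 2)]
        gcongr t * (?_ + ?_)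
        exact isosceles_inequality ht htw
    _ ≤ t * ((2 - √3) ^ 2 *
          ((w ^ 2 - d ^ 2) * symmedianCircumcenterForm (w + d) (w - d) t)) := by
        gcongr
        exact add_sq_le_mul_symmedianCircumcenterForm ht htw (by linarith)
    _ = _ := by ring

variable {a b c : ℝ}

theorem symmedianIncenterForm_mul_heronForm_le_of_least
    (hca : c ≤ a) (hcb : c ≤ b) (hab : |a - b| ≤ c) :
    symmedianIncenterForm a b c * heronForm a b c ≤
      (2 - √3) ^ 2 * (a * b * c * symmedianCircumcenterForm a b c) := by
  obtain ⟨w, d, rfl, rfl⟩ : ∃ w d, a = w + d ∧ b = w - d :=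
    ⟨(a + b) / 2, (a - b) / 2, by ring, by ring⟩
  refine symmedianIncenterForm_mul_heronForm_le_of_abs_le ?_ ?_
  · rwa [show w + d - (w - d) = 2 * d by ring, abs_mul, abs_two] at hab
  · linarith [abs_le.2 ⟨show -(w - c) ≤ d by linarith, show d ≤ w - c by linarith⟩]

theorem symmedianIncenterForm_mul_heronForm_le (ha : a ≤ b + c) (hb : b ≤ c + a) (hc : c ≤ a + b) :
    symmedianIncenterForm a b c * heronForm a b c ≤
      (2 - √3) ^ 2 * (a * b * c * symmedianCircumcenterForm a b c) := by
  wlog hmin : c ≤ a ∧ c ≤ b generalizing a b c with of_least_last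
  · rcases le_total a b with hab | hba
    · have hac : a ≤ c := not_lt.1 fun hca ↦ hmin ⟨hca.le, hca.le.trans hab⟩
      have := of_least_last hb hc ha ⟨hab, hac⟩
      rwa [symmedianIncenterForm_rotate, heronForm_rotate, symmedianCircumcenterForm_rotate,
        show b * c * a = a * b * c by ring] at this
    · have hbc : b ≤ c := not_lt.1 fun hcb ↦ hmin ⟨hcb.le.trans hba, hcb.le⟩
      have := of_least_last hc ha hb ⟨hbc, hba⟩
      rwa [← symmedianIncenterForm_rotate, ← heronForm_rotate, ← symmedianCircumcenterForm_rotate,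
        show c * a * b = a * b * c by ring] at this
  exact symmedianIncenterForm_mul_heronForm_le_of_least hmin.1 hmin.2
    (abs_le.2 ⟨by linarith, by linarith⟩)

end SideLengths

section TriangleCenters

variable {E : Type*} [NormedAddCommGroup E] [InnerProductSpace ℝ E]

theorem dist_centerMass_sq {ι : Type*} {s : Finset ι} {w₁ w₂ : ι → ℝ} (p : ι → E)
    (h₁ : ∑ i ∈ s, w₁ i ≠ 0) (h₂ : ∑ i ∈ s, w₂ i ≠ 0) :
    dist (s.centerMass w₁ p) (s.centerMass w₂ p) ^ 2 =
      (-∑ i ∈ s, ∑ j ∈ s, (w₁ i / ∑ k ∈ s, w₁ k - w₂ i / ∑ k ∈ s, w₂ k) *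
        (w₁ j / ∑ k ∈ s, w₁ k - w₂ j / ∑ k ∈ s, w₂ k) * dist (p i) (p j) ^ 2) / 2 := by
  have sum_eq_zero :
      ∑ i ∈ s, (w₁ i / ∑ k ∈ s, w₁ k - w₂ i / ∑ k ∈ s, w₂ k) = 0 := by
    rw [sum_sub_distrib, ← sum_div, ← sum_div, div_self h₁, div_self h₂, sub_self]
  have sub_eq_sum : s.centerMass w₁ p - s.centerMass w₂ p =
      ∑ i ∈ s, (w₁ i / ∑ k ∈ s, w₁ k - w₂ i / ∑ k ∈ s, w₂ k) • p i := by
    simp only [centerMass, smul_sum, smul_smul, ← sum_sub_distrib, ← sub_smul, div_eq_inv_mul]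
  rw [dist_eq_norm, sub_eq_sum, ← real_inner_self_eq_norm_sq,
    inner_sum_smul_sum_smul_of_sum_eq_zero p sum_eq_zero p sum_eq_zero]
  simp only [dist_eq_norm, sq]

theorem dist_centerMass_three_sq (A B C : E) {x y z x' y' z' : ℝ}
    (h : x + y + z ≠ 0) (h' : x' + y' + z' ≠ 0) :
    dist (univ.centerMass ![x, y, z] ![A, B, C]) (univ.centerMass ![x', y', z'] ![A, B, C]) ^ 2 =
      -(dist B C ^ 2 * ((y / (x + y + z) - y' / (x' + y' + z')) *
            (z / (x + y + z) - z' / (x' + y' + z')))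
        + dist C A ^ 2 * ((z / (x + y + z) - z' / (x' + y' + z')) *
            (x / (x + y + z) - x' / (x' + y' + z')))
        + dist A B ^ 2 * ((x / (x + y + z) - x' / (x' + y' + z')) *
            (y / (x + y + z) - y' / (x' + y' + z')))) := by
  rw [dist_centerMass_sq _ (by simpa [Fin.sum_univ_three] using h)
    (by simpa [Fin.sum_univ_three] using h')]
  simp only [Fin.sum_univ_three, Matrix.cons_val, dist_self, dist_comm B A, dist_comm C B,
    dist_comm A C]
  ring

/-- `tcenter` in an arbitrary real inner product space: the center of mass of `A`, `B`, `C` with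
weights `f a b c`, `f b c a`, `f c a b`, where `a`, `b`, `c` are the side lengths. -/
noncomputable def triangleCenter (f : ℝ → ℝ → ℝ → ℝ) (A B C : E) : E :=
  univ.centerMass ![f (dist B C) (dist C A) (dist A B), f (dist C A) (dist A B) (dist B C),
    f (dist A B) (dist B C) (dist C A)] ![A, B, C]

theorem tcenter_eq_triangleCenter : tcenter = triangleCenter := by
  ext f A B C : 4
  simp only [tcenter, bary, triangleCenter, centerMass, Fin.sum_univ_three, Matrix.cons_val]

/-- The incenter X₁ of the triangle `A B C`, given by its barycentric coordinates. -/
noncomputable def incenterPoint (A B C : E) : E :=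
  triangleCenter (fun a _ _ ↦ a) A B C

/-- The circumcenter X₃ of the triangle `A B C`, given by its barycentric coordinates. -/
noncomputable def circumcenterPoint (A B C : E) : E :=
  triangleCenter (fun a b c ↦ a ^ 2 * (a ^ 2 - b ^ 2 - c ^ 2)) A B C

/-- The symmedian point X₆ of the triangle `A B C`, given by its barycentric coordinates. -/
noncomputable def symmedianPoint (A B C : E) : E :=
  triangleCenter (fun a _ _ ↦ a ^ 2) A B C

variable {A B C : E} {a b c : ℝ}

theorem dist_symmedianPoint_incenterPoint_sq (hAB : A ≠ B)
    (ha : dist B C = a) (hb : dist C A = b) (hc : dist A B = c) :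
    dist (symmedianPoint A B C) (incenterPoint A B C) ^ 2 =
      a * b * c * symmedianIncenterForm a b c / ((a + b + c) * (a ^ 2 + b ^ 2 + c ^ 2) ^ 2) := by
  have ha0 : 0 ≤ a := ha ▸ dist_nonneg
  have hb0 : 0 ≤ b := hb ▸ dist_nonneg
  have hc0 : 0 < c := hc ▸ dist_pos.2 hAB
  have sum_ne_zero : a + b + c ≠ 0 := by positivity
  have sum_sq_ne_zero : a ^ 2 + b ^ 2 + c ^ 2 ≠ 0 := by positivity
  rw [symmedianPoint, incenterPoint, triangleCenter, triangleCenter, ha, hb, hc,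
    dist_centerMass_three_sq _ _ _ sum_sq_ne_zero sum_ne_zero, ha, hb, hc, symmedianIncenterForm]
  field_simp
  ring

theorem circumcenter_weight_sum (a b c : ℝ) :
    a ^ 2 * (a ^ 2 - b ^ 2 - c ^ 2) + b ^ 2 * (b ^ 2 - c ^ 2 - a ^ 2)
      + c ^ 2 * (c ^ 2 - a ^ 2 - b ^ 2) = -((a + b + c) * heronForm a b c) := by
  unfold heronForm; ring

theorem strict_triangle_inequality (h : AffineIndependent ℝ ![A, B, C]) :
    dist B C < dist C A + dist A B := by
  rw [add_comm, dist_comm A B, dist_comm C A]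
  exact dist_lt_dist_add_dist_iff.2 (h.comm_left.not_wbtw_of_injective 0 1 2 (by decide))

theorem strict_triangle_inequalities (h : AffineIndependent ℝ ![A, B, C]) :
    dist B C < dist C A + dist A B ∧ dist C A < dist A B + dist B C ∧
      dist A B < dist B C + dist C A :=
  have hBCA : AffineIndependent ℝ ![B, C, A] := h.comm_left.comm_right
  ⟨strict_triangle_inequality h, strict_triangle_inequality hBCA,
    strict_triangle_inequality hBCA.comm_left.comm_right⟩

theorem heronForm_dist_pos (h : AffineIndependent ℝ ![A, B, C]) :
    0 < heronForm (dist B C) (dist C A) (dist A B) :=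
  have ⟨ha, hb, hc⟩ := strict_triangle_inequalities h
  mul_pos (mul_pos (sub_pos.2 ha) (sub_pos.2 hb)) (sub_pos.2 hc)

theorem dist_symmedianPoint_circumcenterPoint_sq (h : AffineIndependent ℝ ![A, B, C])
    (ha : dist B C = a) (hb : dist C A = b) (hc : dist A B = c) :
    dist (symmedianPoint A B C) (circumcenterPoint A B C) ^ 2 =
      (a * b * c) ^ 2 * symmedianCircumcenterForm a b c /
        ((a + b + c) * heronForm a b c * (a ^ 2 + b ^ 2 + c ^ 2) ^ 2) := by
  have hAB : A ≠ B := h.injective.ne (show (0 : Fin 3) ≠ 1 by decide)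
  have ha0 : 0 ≤ a := ha ▸ dist_nonneg
  have hb0 : 0 ≤ b := hb ▸ dist_nonneg
  have hc0 : 0 < c := hc ▸ dist_pos.2 hAB
  have heron_pos : 0 < heronForm a b c := by simpa only [ha, hb, hc] using heronForm_dist_pos h
  have sum_sq_ne_zero : a ^ 2 + b ^ 2 + c ^ 2 ≠ 0 := by positivity
  have weight_sum_ne_zero : a ^ 2 * (a ^ 2 - b ^ 2 - c ^ 2) + b ^ 2 * (b ^ 2 - c ^ 2 - a ^ 2)
      + c ^ 2 * (c ^ 2 - a ^ 2 - b ^ 2) ≠ 0 := by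
    rw [circumcenter_weight_sum, neg_ne_zero]
    positivity
  rw [symmedianPoint, circumcenterPoint, triangleCenter, triangleCenter, ha, hb, hc,
    dist_centerMass_three_sq _ _ _ sum_sq_ne_zero weight_sum_ne_zero, ha, hb, hc,
    circumcenter_weight_sum, symmedianCircumcenterForm]
  field_simp
  unfold heronForm
  ring

theorem stmt_5_general (h : AffineIndependent ℝ ![A, B, C]) :
    dist (symmedianPoint A B C) (incenterPoint A B C) ≤
      (2 - √3) * dist (symmedianPoint A B C) (circumcenterPoint A B C) := by
  have hAB : A ≠ B := h.injective.ne (show (0 : Fin 3) ≠ 1 by decide)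
  have two_sub_sqrt_three_nonneg : 0 ≤ 2 - √3 := sub_nonneg.2 (sqrt_le_iff.2 (by norm_num))
  have heron_pos := heronForm_dist_pos h
  obtain ⟨ha, hb, hc⟩ := strict_triangle_inequalities h
  have form_inequality := symmedianIncenterForm_mul_heronForm_le ha.le hb.le hc.le
  have ha0 := dist_nonneg (x := B) (y := C)
  have hb0 := dist_nonneg (x := C) (y := A)
  have hc0 := dist_nonneg (x := A) (y := B)
  refine (sq_le_sq₀ dist_nonneg (mul_nonneg two_sub_sqrt_three_nonneg dist_nonneg)).1 ?_
  rw [mul_pow, dist_symmedianPoint_incenterPoint_sq hAB rfl rfl rfl,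
    dist_symmedianPoint_circumcenterPoint_sq h rfl rfl rfl]
  generalize dist B C = a, dist C A = b, dist A B = c at *
  calc a * b * c * symmedianIncenterForm a b c / ((a + b + c) * (a ^ 2 + b ^ 2 + c ^ 2) ^ 2)
      = a * b * c / ((a + b + c) * heronForm a b c * (a ^ 2 + b ^ 2 + c ^ 2) ^ 2) *
          (symmedianIncenterForm a b c * heronForm a b c) := by field_simp
    _ ≤ a * b * c / ((a + b + c) * heronForm a b c * (a ^ 2 + b ^ 2 + c ^ 2) ^ 2) *
          ((2 - √3) ^ 2 * (a * b * c * symmedianCircumcenterForm a b c)) := by gcongr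
    _ = _ := by ring

end TriangleCenters

theorem stmt_5 (A B C : EuclideanSpace ℝ (Fin 2))
    (h : AffineIndependent ℝ ![A, B, C]) :
    dist (tcenter (fun a b c => a^2) A B C) (tcenter (fun a b c => a) A B C) ≤ (2 - Real.sqrt 3) * dist (tcenter (fun a b c => a^2) A B C) (tcenter (fun a b c => a^2*(a^2 - b^2 - c^2)) A B C) := by
  simp only [tcenter_eq_triangleCenter]
  exact stmt_5_general h
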